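/- For every n ≥ 4 and every i, H̃_i(Δ_n; K) ≅ H̃_{i-1}(Δ_{n-3}; K), where Δ_n is the clique complex of the complement of the cycle C_n; consequently dim_K H̃_{k-1}(Δ_{3k}; K) = 2, dim_K H̃_{k-1}(Δ_{3k+1}; K) = 1, and dim_K H̃_k(Δ_{3k+2}; K) = 1. -/

import Mathlib

/-! Both halves of the theorem are statements about dimensions over the field `K`, and follow from a
computation of `dim H̃_i` of the independence complex of every cycle (`finrank_cycle`).

Throughout, a complex `Δ` is split at a vertex `v` which is the largest vertex of every face that
contains it. Then the projection of chains onto the link of `v` is a chain map, whose kernel is the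
chain complex of the deletion of `v`, and the connecting map in homology is, up to sign, induced by
the inclusion of the link in the deletion. If in every degree the link or the deletion has no
homology, that map vanishes, so `dim H̃_i(Δ) = dim H̃_{i-1}(link) + dim H̃_i(deletion)`
(`finrank_homologyLevel_succ`).

For a path on `m ≥ 2` vertices, take `v` next to the endpoint `w`: the deletion is a cone with apex
`w`, hence acyclic (`finrank_cone`), and the link is the complex of a path on `m - 3` vertices (the
complex `{∅}` of the empty path if `m = 2`, as truncated subtraction gives).
So by induction (`finrank_path`) the path gives a homology sphere of dimension `k - 1` for
`m = 3k` and of dimension `k` for `m = 3k + 2`, and an acyclic complex for `m = 3k + 1`.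

For the cycle on `n` vertices, with `v` the last vertex, deletion and link are the complexes of
paths on `n - 1` and `n - 3` vertices. By the path computation these never have homology in the
same degree, so the two contributions add up. In the isomorphism the case `n = 4` is separate,
since `cycleGraph 1` has no loop and its independence complex is a point.

All paths are intervals of the vertex set `Fin n` of the cycle, so links and deletions are families
of subsets of the same `Fin n`, and no change of vertex set is needed. Chain level `c` is the span
of faces with `c` vertices, that is, dimension `c - 1`.
-/

open Finset

attribute [local instance] Classical.propDecidable

variable (K : Type) [Field K]

/-- Quotient of the submodule `A` by (the pullback of) the submodule `B`. -/
noncomputable def quotMod {M : Type} [AddCommGroup M] [Module K M] (A B : Submodule K M) :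
    Type :=
  ↥A ⧸ Submodule.comap A.subtype B

noncomputable instance {M : Type} [AddCommGroup M] [Module K M] (A B : Submodule K M) :
    AddCommGroup (quotMod K A B) :=
  inferInstanceAs (AddCommGroup (↥A ⧸ Submodule.comap A.subtype B))

noncomputable instance {M : Type} [AddCommGroup M] [Module K M] (A B : Submodule K M) :
    Module K (quotMod K A B) :=
  inferInstanceAs (Module K (↥A ⧸ Submodule.comap A.subtype B))

variable {n : ℕ}

/-- The simplicial boundary operator on the total chain module spanned by all
subsets of `Fin n` (the empty set accounting for the augmentation). -/
noncomputable def bdry : ((Finset (Fin n)) →₀ K) →ₗ[K] ((Finset (Fin n)) →₀ K) :=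
  Finsupp.lsum K fun s => LinearMap.toSpanSingleton K _
    (∑ v ∈ s, ((-1 : K) ^ (s.filter (· < v)).card) • Finsupp.single (s.erase v) (1 : K))

/-- The subspace of chains of the complex `Δ` spanned by faces of cardinality `c`. -/
noncomputable def degSub (Δ : Finset (Finset (Fin n))) (c : ℕ) :
    Submodule K ((Finset (Fin n)) →₀ K) :=
  Submodule.span K {x | ∃ s ∈ Δ, s.card = c ∧ x = Finsupp.single s (1 : K)}

/-- Reduced homology of `Δ` at chain level `c`, that is, `H̃_{c-1}(Δ; K)`:
cycles supported in faces of cardinality `c` modulo boundaries of chains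
supported in faces of cardinality `c + 1`. -/
noncomputable def homologyLevel (Δ : Finset (Finset (Fin n))) (c : ℕ) : Type :=
  quotMod K (degSub K Δ c ⊓ LinearMap.ker (bdry K))
    (Submodule.map (bdry K) (degSub K Δ (c + 1)))

noncomputable instance (Δ : Finset (Finset (Fin n))) (c : ℕ) :
    AddCommGroup (homologyLevel K Δ c) :=
  inferInstanceAs (AddCommGroup (quotMod K _ _))

noncomputable instance (Δ : Finset (Finset (Fin n))) (c : ℕ) :
    Module K (homologyLevel K Δ c) :=
  inferInstanceAs (Module K (quotMod K _ _))

/-- The `i`-th reduced simplicial homology `H̃_i(Δ; K)`. -/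
noncomputable def reducedHomology (Δ : Finset (Finset (Fin n))) (i : ℕ) : Type :=
  homologyLevel K Δ (i + 1)

noncomputable instance (Δ : Finset (Finset (Fin n))) (i : ℕ) :
    AddCommGroup (reducedHomology K Δ i) :=
  inferInstanceAs (AddCommGroup (homologyLevel K Δ (i + 1)))

noncomputable instance (Δ : Finset (Finset (Fin n))) (i : ℕ) :
    Module K (reducedHomology K Δ i) :=
  inferInstanceAs (Module K (homologyLevel K Δ (i + 1)))

/-- The independence complex of `G`, i.e. the clique complex of `Gᶜ`. -/
noncomputable def indepCx (G : SimpleGraph (Fin n)) : Finset (Finset (Fin n)) :=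
  Finset.univ.powerset.filter fun s => ∀ i ∈ s, ∀ j ∈ s, ¬ G.Adj i j

/-- The link of a face `F` in the complex `Δ`. -/
noncomputable def linkCx (Δ : Finset (Finset (Fin n))) (F : Finset (Fin n)) :
    Finset (Finset (Fin n)) :=
  Finset.univ.powerset.filter fun s => Disjoint s F ∧ s ∪ F ∈ Δ

/-- The graded Betti number `β_{i,d}` of the vertex cover ideal `J(G)`, expressed via
Hochster's formula: `β_{i,d}(J(G)) = Σ_{F ∈ Δ(Gᶜ), |F| = n - d} dim H̃_{i-1}(link F)`. -/
noncomputable def coverBetti (G : SimpleGraph (Fin n)) (i d : ℕ) : ℕ :=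
  ∑ F ∈ (indepCx G).filter (fun F => F.card + d = n),
    Module.finrank K (homologyLevel K (linkCx (indepCx G) F) i)

/-- The projective dimension of the vertex cover ideal `J(G)`. -/
noncomputable def projdimJ (G : SimpleGraph (Fin n)) : ℕ :=
  sSup {i | ∃ d, coverBetti K G i d ≠ 0}

/-- The Castelnuovo–Mumford regularity of the vertex cover ideal `J(G)`. -/
noncomputable def regJ (G : SimpleGraph (Fin n)) : ℕ :=
  sSup {j | ∃ i, coverBetti K G i (i + j) ≠ 0}

open SimpleGraph

/-! ### Chains, cycles and boundaries -/

/-- The cycles of `Δ` at chain level `c`. -/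
noncomputable def cyc (Δ : Finset (Finset (Fin n))) (c : ℕ) :
    Submodule K ((Finset (Fin n)) →₀ K) :=
  degSub K Δ c ⊓ LinearMap.ker (bdry K)

/-- The boundaries of `Δ` at chain level `c`. -/
noncomputable def bdd (Δ : Finset (Finset (Fin n))) (c : ℕ) :
    Submodule K ((Finset (Fin n)) →₀ K) :=
  Submodule.map (bdry K) (degSub K Δ (c + 1))

/-- The linear extension of `s ↦ insert v s` to chains: the join with the vertex `v`. -/
noncomputable def ins (v : Fin n) : ((Finset (Fin n)) →₀ K) →ₗ[K] ((Finset (Fin n)) →₀ K) :=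
  Finsupp.lmapDomain K K (insert v)

/-- The projection of chains onto the link of `v`: a face containing `v` loses `v`, every other
face is sent to `0`. -/
noncomputable def lkProj (v : Fin n) : ((Finset (Fin n)) →₀ K) →ₗ[K] ((Finset (Fin n)) →₀ K) :=
  Finsupp.linearCombination K fun s => if v ∈ s then Finsupp.single (s.erase v) (1 : K) else 0

/-- The faces of `Δ` that avoid the vertex `v`. -/
noncomputable def delCx (Δ : Finset (Finset (Fin n))) (v : Fin n) : Finset (Finset (Fin n)) :=
  Δ.filter fun s => v ∉ s

/-- `Δ` is closed under taking subsets. -/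
def DownClosed (Δ : Finset (Finset (Fin n))) : Prop :=
  ∀ s ∈ Δ, ∀ t ⊆ s, t ∈ Δ


section CycleHomology

variable {K} {Δ Λ : Finset (Finset (Fin n))} {v : Fin n} {c : ℕ}

lemma single_mem_degSub {s : Finset (Fin n)} (hs : s ∈ Δ) (hc : s.card = c) :
    Finsupp.single s (1 : K) ∈ degSub K Δ c :=
  Submodule.subset_span ⟨s, hs, hc, rfl⟩

/-- A linear map sends the chains of `Δ` into `N` as soon as it does so for the faces. -/
lemma map_mem_of_degSub (f : ((Finset (Fin n)) →₀ K) →ₗ[K] ((Finset (Fin n)) →₀ K))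
    (N : Submodule K ((Finset (Fin n)) →₀ K))
    (h : ∀ s ∈ Δ, s.card = c → f (Finsupp.single s 1) ∈ N) {x} (hx : x ∈ degSub K Δ c) :
    f x ∈ N := by
  have : degSub K Δ c ≤ N.comap f := by
    refine Submodule.span_le.2 ?_
    rintro _ ⟨s, hs, hc, rfl⟩
    exact h s hs hc
  exact this hx

lemma eq_of_degSub (f g : ((Finset (Fin n)) →₀ K) →ₗ[K] ((Finset (Fin n)) →₀ K))
    (h : ∀ s ∈ Δ, s.card = c → f (Finsupp.single s 1) = g (Finsupp.single s 1))
    {x} (hx : x ∈ degSub K Δ c) : f x = g x := by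
  have : (f - g) x ∈ (⊥ : Submodule K ((Finset (Fin n)) →₀ K)) :=
    map_mem_of_degSub _ _ (fun s hs hc => by simp [h s hs hc]) hx
  simpa [sub_eq_zero] using this

lemma degSub_mono (h : Λ ⊆ Δ) : degSub K Λ c ≤ degSub K Δ c := by
  refine Submodule.span_mono ?_
  rintro _ ⟨s, hs, hc, rfl⟩
  exact ⟨s, h hs, hc, rfl⟩

lemma cyc_mono (h : Λ ⊆ Δ) : cyc K Λ c ≤ cyc K Δ c := inf_le_inf_right _ (degSub_mono h)

lemma bdd_mono (h : Λ ⊆ Δ) : bdd K Λ c ≤ bdd K Δ c := Submodule.map_mono (degSub_mono h)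

lemma bdry_single (s : Finset (Fin n)) : bdry K (Finsupp.single s (1 : K)) =
    ∑ w ∈ s, ((-1 : K) ^ (s.filter (· < w)).card) • Finsupp.single (s.erase w) (1 : K) := by
  simp [bdry]

lemma ins_single (s : Finset (Fin n)) :
    ins K v (Finsupp.single s (1 : K)) = Finsupp.single (insert v s) 1 := by
  simp [ins]

lemma lkProj_single (s : Finset (Fin n)) : lkProj K v (Finsupp.single s (1 : K)) =
    if v ∈ s then Finsupp.single (s.erase v) (1 : K) else 0 := by
  simp [lkProj]

lemma bdry_mem (hΔ : DownClosed Δ) {x} (hx : x ∈ degSub K Δ (c + 1)) :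
    bdry K x ∈ degSub K Δ c := by
  refine map_mem_of_degSub _ _ (fun s hs hc => ?_) hx
  rw [bdry_single]
  refine Submodule.sum_mem _ fun w hw => Submodule.smul_mem _ _ (single_mem_degSub ?_ ?_)
  · exact hΔ s hs _ (erase_subset _ _)
  · rw [card_erase_of_mem hw]; omega

/-- Since the vertex `v` comes last, removing it from `insert v s` carries the sign
`(-1) ^ s.card`, and the signs of the other vertices are those they have in `s`. -/
lemma bdry_insert {s : Finset (Fin n)} (h : ∀ i ∈ s, i < v) :
    bdry K (Finsupp.single (insert v s) (1 : K)) =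
      ins K v (bdry K (Finsupp.single s 1)) + (-1 : K) ^ s.card • Finsupp.single s 1 := by
  have hv : v ∉ s := fun hv => lt_irrefl _ (h v hv)
  rw [bdry_single, bdry_single, sum_insert hv, add_comm, map_sum]
  congr 1
  · refine sum_congr rfl fun w hw => ?_
    rw [map_smul, ins_single, filter_insert, if_neg (h w hw).not_gt,
      erase_insert_of_ne (h w hw).ne']
  · rw [erase_insert hv, filter_insert, if_neg (lt_irrefl v), filter_true_of_mem h]

/-- `bdry_insert`, extended linearly to chains whose vertices all precede `v`. -/
lemma bdry_ins (h : ∀ s ∈ Λ, ∀ i ∈ s, i < v) {x} (hx : x ∈ degSub K Λ c) :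
    bdry K (ins K v x) = ins K v (bdry K x) + (-1 : K) ^ c • x := by
  refine eq_of_degSub (bdry K ∘ₗ ins K v) (ins K v ∘ₗ bdry K + (-1 : K) ^ c • LinearMap.id)
    (fun s hs hc => ?_) hx
  simp [ins_single, bdry_insert (h s hs), hc]

lemma lkProj_ins (h : ∀ s ∈ Λ, v ∉ s) {x} (hx : x ∈ degSub K Λ c) :
    lkProj K v (ins K v x) = x := by
  refine eq_of_degSub (lkProj K v ∘ₗ ins K v) LinearMap.id (fun s hs hc => ?_) hx
  simp [ins_single, lkProj_single, erase_insert (h s hs)]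

lemma lkProj_eq_zero (h : ∀ s ∈ Λ, v ∉ s) {x} (hx : x ∈ degSub K Λ c) : lkProj K v x = 0 := by
  refine eq_of_degSub (lkProj K v) 0 (fun s hs hc => ?_) hx
  simp [lkProj_single, h s hs]

lemma bdry_empty : bdry K (Finsupp.single (∅ : Finset (Fin n)) (1 : K)) = 0 := by
  simp [bdry_single]

/-- `∂ ∘ ∂ = 0` on a face, by removing its last vertex: the two signs produced by
`bdry_insert` and `bdry_ins` are opposite. -/
lemma bdry_bdry_single (s : Finset (Fin n)) : bdry K (bdry K (Finsupp.single s (1 : K))) = 0 := by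
  induction s using Finset.induction_on_max with
  | empty => simp [bdry_empty]
  | insert v s hs ih =>
    rw [bdry_insert hs]
    obtain hc | ⟨c, hc⟩ : s = ∅ ∨ ∃ c, s.card = c + 1 := by
      rcases s.eq_empty_or_nonempty with h | h
      · exact .inl h
      · exact .inr ⟨s.card - 1, by have := h.card_pos; omega⟩
    · subst hc; simp [bdry_empty]
    · have hd : DownClosed s.powerset := fun t ht u hu =>
        mem_powerset.2 (hu.trans (mem_powerset.1 ht))
      have hm : bdry K (Finsupp.single s (1 : K)) ∈ degSub K s.powerset c :=
        bdry_mem hd (single_mem_degSub (mem_powerset_self s) hc)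
      rw [map_add, bdry_ins (fun t ht i hi => hs i (mem_powerset.1 ht hi)) hm, ih, hc, map_smul]
      simp [pow_succ]

lemma bdry_bdry (x : (Finset (Fin n)) →₀ K) : bdry K (bdry K x) = 0 := by
  have : bdry K ∘ₗ bdry K = (0 : ((Finset (Fin n)) →₀ K) →ₗ[K] ((Finset (Fin n)) →₀ K)) := by
    refine Finsupp.lhom_ext' fun s => LinearMap.ext_ring ?_
    simpa using bdry_bdry_single s
  exact LinearMap.congr_fun this x

lemma bdd_le_cyc (hΔ : DownClosed Δ) : bdd K Δ c ≤ cyc K Δ c := by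
  rintro _ ⟨x, hx, rfl⟩
  exact ⟨bdry_mem hΔ hx, bdry_bdry x⟩

lemma finrank_homologyLevel (hΔ : DownClosed Δ) :
    Module.finrank K (homologyLevel K Δ c) + Module.finrank K (bdd K Δ c) =
      Module.finrank K (cyc K Δ c) := by
  have h1 := Submodule.finrank_quotient_add_finrank (R := K) (M := cyc K Δ c)
    (Submodule.comap (cyc K Δ c).subtype (bdd K Δ c))
  rw [(Submodule.comapSubtypeEquivOfLe (bdd_le_cyc (K := K) (c := c) hΔ)).finrank_eq] at h1
  exact h1

lemma finrank_homologyLevel_eq_zero (hΔ : DownClosed Δ) :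
    Module.finrank K (homologyLevel K Δ c) = 0 ↔ cyc K Δ c ≤ bdd K Δ c := by
  have h := finrank_homologyLevel (K := K) (c := c) hΔ
  constructor
  · intro h0
    exact (Submodule.eq_of_le_of_finrank_eq (bdd_le_cyc hΔ) (by omega)).ge
  · intro h0
    rw [le_antisymm h0 (bdd_le_cyc hΔ)] at h
    omega

/-! ### Deletion and link of a vertex -/

lemma mem_linkCx {s : Finset (Fin n)} : s ∈ linkCx Δ {v} ↔ v ∉ s ∧ insert v s ∈ Δ := by
  simp [linkCx]

lemma mem_delCx {s : Finset (Fin n)} : s ∈ delCx Δ v ↔ s ∈ Δ ∧ v ∉ s := by simp [delCx]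

lemma DownClosed.linkCx (hΔ : DownClosed Δ) : DownClosed (linkCx Δ {v}) := by
  intro s hs t ht
  rw [mem_linkCx] at hs ⊢
  exact ⟨fun h => hs.1 (ht h), hΔ _ hs.2 _ (insert_subset_insert _ ht)⟩

lemma DownClosed.delCx (hΔ : DownClosed Δ) : DownClosed (delCx Δ v) := by
  intro s hs t ht
  rw [mem_delCx] at hs ⊢
  exact ⟨hΔ _ hs.1 _ ht, fun h => hs.2 (ht h)⟩

lemma linkCx_subset_delCx (hΔ : DownClosed Δ) : linkCx Δ {v} ⊆ delCx Δ v := by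
  intro s hs
  rw [mem_linkCx] at hs
  exact mem_delCx.2 ⟨hΔ _ hs.2 _ (subset_insert _ _), hs.1⟩

lemma lkProj_mem {x} (hx : x ∈ degSub K Δ (c + 1)) : lkProj K v x ∈ degSub K (linkCx Δ {v}) c := by
  refine map_mem_of_degSub _ _ (fun s hs hc => ?_) hx
  rw [lkProj_single]
  split_ifs with hv
  · refine single_mem_degSub (mem_linkCx.2 ⟨notMem_erase _ _, by rwa [insert_erase hv]⟩) ?_
    rw [card_erase_of_mem hv]; omega
  · exact zero_mem _

lemma ins_mem {x} (hx : x ∈ degSub K (linkCx Δ {v}) c) : ins K v x ∈ degSub K Δ (c + 1) := by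
  refine map_mem_of_degSub _ _ (fun s hs hc => ?_) hx
  rw [mem_linkCx] at hs
  rw [ins_single]
  exact single_mem_degSub hs.2 (by rw [card_insert_of_notMem hs.1, hc])

/-- The part of a chain of `Δ` supported on the faces that avoid `v`. -/
lemma sub_ins_mem {x} (hx : x ∈ degSub K Δ c) :
    x - ins K v (lkProj K v x) ∈ degSub K (delCx Δ v) c := by
  refine map_mem_of_degSub (LinearMap.id - ins K v ∘ₗ lkProj K v) _ (fun s hs hc => ?_) hx
  simp only [LinearMap.sub_apply, LinearMap.id_apply, LinearMap.comp_apply, lkProj_single]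
  split_ifs with hv
  · rw [ins_single, insert_erase hv, sub_self]
    exact zero_mem _
  · simpa using single_mem_degSub (mem_delCx.2 ⟨hs, hv⟩) hc

lemma link_lt (hv : ∀ s ∈ Δ, v ∈ s → ∀ i ∈ s, i ≤ v) :
    ∀ s ∈ linkCx Δ {v}, ∀ i ∈ s, i < v := by
  intro s hs i hi
  rw [mem_linkCx] at hs
  exact lt_of_le_of_ne (hv _ hs.2 (mem_insert_self _ _) i (mem_insert_of_mem hi))
    fun h => hs.1 (h ▸ hi)

/-- The projection to the link is a chain map, without sign because `v` is the last vertex of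
every face that contains it. -/
lemma lkProj_bdry (hΔ : DownClosed Δ) (hv : ∀ s ∈ Δ, v ∈ s → ∀ i ∈ s, i ≤ v) {x}
    (hx : x ∈ degSub K Δ (c + 2)) : lkProj K v (bdry K x) = bdry K (lkProj K v x) := by
  have h1 := lkProj_mem (v := v) hx
  have h2 := bdry_ins (link_lt hv) h1
  have h3 := lkProj_eq_zero (fun s hs => (mem_delCx.1 hs).2)
    (bdry_mem hΔ.delCx (sub_ins_mem (v := v) hx))
  rw [map_sub, map_sub, h2, map_add, map_smul,
    lkProj_ins (fun s hs => (mem_linkCx.1 hs).1) (bdry_mem hΔ.linkCx h1),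
    lkProj_eq_zero (fun s hs => (mem_linkCx.1 hs).1) h1, smul_zero, add_zero, sub_eq_zero] at h3
  exact h3

/-- Rank–nullity for the restriction of `f` to `M`. -/
lemma finrank_split (M : Submodule K ((Finset (Fin n)) →₀ K))
    (f : ((Finset (Fin n)) →₀ K) →ₗ[K] ((Finset (Fin n)) →₀ K)) :
    Module.finrank K M = Module.finrank K (M.map f) +
      Module.finrank K ↥(M ⊓ LinearMap.ker f) := by
  have h := LinearMap.finrank_range_add_finrank_ker (K := K) (V := M) (f.domRestrict M)
  rw [LinearMap.range_domRestrict, LinearMap.ker_domRestrict] at h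
  rw [← h]
  congr 1
  have e : Submodule.comap M.subtype (LinearMap.ker f) =
    Submodule.comap M.subtype (M ⊓ LinearMap.ker f) := by simp
  have := (Submodule.comapSubtypeEquivOfLe (inf_le_left : M ⊓ LinearMap.ker f ≤ M)).finrank_eq
  rw [← e] at this
  exact this

lemma mem_del_of_lkProj {x} (hx : x ∈ degSub K Δ c) (h : lkProj K v x = 0) :
    x ∈ degSub K (delCx Δ v) c := by
  simpa [h] using sub_ins_mem (v := v) hx

lemma del_lkProj {x} (hx : x ∈ degSub K (delCx Δ v) c) : lkProj K v x = 0 :=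
  lkProj_eq_zero (fun _ hs => (mem_delCx.1 hs).2) hx

lemma delCx_subset : delCx Δ v ⊆ Δ := filter_subset _ _

/-- The cycles of `Δ` project onto those of the link, with kernel those of the deletion, when
every cycle of the link bounds in the deletion. -/
lemma finrank_cyc (hΔ : DownClosed Δ) (hv : ∀ s ∈ Δ, v ∈ s → ∀ i ∈ s, i ≤ v)
    (h : cyc K (linkCx Δ {v}) c ≤ bdd K (delCx Δ v) c) :
    Module.finrank K (cyc K Δ (c + 1)) =
      Module.finrank K (cyc K (linkCx Δ {v}) c) + Module.finrank K (cyc K (delCx Δ v) (c + 1)) := by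
  have h1 : (cyc K Δ (c + 1)).map (lkProj K v) = cyc K (linkCx Δ {v}) c := by
    apply le_antisymm
    · rintro _ ⟨x, ⟨hx, hx0⟩, rfl⟩
      refine ⟨lkProj_mem hx, ?_⟩
      cases c with
      | zero =>
        refine eq_of_degSub (bdry K) 0 (fun s hs hc => ?_) (lkProj_mem (v := v) hx)
        rw [card_eq_zero.1 hc, bdry_empty, LinearMap.zero_apply]
      | succ c =>
        rw [SetLike.mem_coe, LinearMap.mem_ker, ← lkProj_bdry hΔ hv hx, LinearMap.mem_ker.1 hx0, map_zero]
    · intro y hy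
      obtain ⟨z, hz, hzy⟩ := h hy
      obtain ⟨hy1, hy0⟩ := hy
      rw [SetLike.mem_coe, LinearMap.mem_ker] at hy0
      -- correct `ins v y`, whose boundary is `± y`, by a chain of the deletion bounding `y`
      refine ⟨ins K v y - (-1 : K) ^ c • z, ⟨sub_mem (ins_mem hy1)
        (Submodule.smul_mem _ _ (degSub_mono delCx_subset hz)), ?_⟩, ?_⟩
      · rw [SetLike.mem_coe, LinearMap.mem_ker, map_sub, map_smul, hzy, bdry_ins (link_lt hv) hy1, hy0]
        simp
      · rw [map_sub, map_smul, del_lkProj hz, lkProj_ins (fun s hs => (mem_linkCx.1 hs).1) hy1]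
        simp
  have h2 : cyc K Δ (c + 1) ⊓ LinearMap.ker (lkProj K v) = cyc K (delCx Δ v) (c + 1) := by
    apply le_antisymm
    · rintro x ⟨⟨hx, hx0⟩, hx1⟩
      exact ⟨mem_del_of_lkProj hx hx1, hx0⟩
    · rintro x hx
      exact ⟨cyc_mono delCx_subset hx, del_lkProj hx.1⟩
  rw [finrank_split _ (lkProj K v), h1, h2]

/-- The boundaries of `Δ` project onto those of the link, with kernel those of the deletion, when
every cycle of the link bounds in the deletion. -/
lemma finrank_bdd (hΔ : DownClosed Δ) (hv : ∀ s ∈ Δ, v ∈ s → ∀ i ∈ s, i ≤ v)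
    (h : cyc K (linkCx Δ {v}) (c + 1) ≤ bdd K (delCx Δ v) (c + 1)) :
    Module.finrank K (bdd K Δ (c + 1)) =
      Module.finrank K (bdd K (linkCx Δ {v}) c) + Module.finrank K (bdd K (delCx Δ v) (c + 1)) := by
  have h1 : (bdd K Δ (c + 1)).map (lkProj K v) = bdd K (linkCx Δ {v}) c := by
    apply le_antisymm
    · rintro _ ⟨_, ⟨x, hx, rfl⟩, rfl⟩
      exact ⟨_, lkProj_mem hx, (lkProj_bdry hΔ hv hx).symm⟩
    · rintro _ ⟨y, hy, rfl⟩
      refine ⟨_, ⟨_, ins_mem hy, rfl⟩, ?_⟩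
      rw [lkProj_bdry hΔ hv (ins_mem hy), lkProj_ins (fun s hs => (mem_linkCx.1 hs).1) hy]
  have h2 : bdd K Δ (c + 1) ⊓ LinearMap.ker (lkProj K v) = bdd K (delCx Δ v) (c + 1) := by
    apply le_antisymm
    · rintro _ ⟨⟨x, hx, rfl⟩, hx0⟩
      rw [SetLike.mem_coe, LinearMap.mem_ker, lkProj_bdry hΔ hv hx] at hx0
      have h3 := lkProj_mem (v := v) hx
      have h4 : bdry K x = bdry K (x - ins K v (lkProj K v x)) +
          (-1 : K) ^ (c + 1) • lkProj K v x := by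
        rw [map_sub, bdry_ins (link_lt hv) h3, hx0]
        simp
      rw [h4]
      exact add_mem ⟨_, sub_ins_mem hx, rfl⟩ (Submodule.smul_mem _ _ (h ⟨h3, hx0⟩))
    · rintro x hx
      exact ⟨bdd_mono delCx_subset hx, del_lkProj (bdd_le_cyc hΔ.delCx hx).1⟩
  rw [finrank_split _ (lkProj K v), h1, h2]

/-- The long exact sequence of the deletion and the link of `v`, in the case where in each degree
one of the two has no homology, so that it breaks up into short exact sequences. -/
lemma finrank_homologyLevel_succ (hΔ : DownClosed Δ) (hv : ∀ s ∈ Δ, v ∈ s → ∀ i ∈ s, i ≤ v)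
    (h : ∀ c, Module.finrank K (homologyLevel K (linkCx Δ {v}) c) = 0 ∨
      Module.finrank K (homologyLevel K (delCx Δ v) c) = 0) (c : ℕ) :
    Module.finrank K (homologyLevel K Δ (c + 1)) =
      Module.finrank K (homologyLevel K (linkCx Δ {v}) c) +
        Module.finrank K (homologyLevel K (delCx Δ v) (c + 1)) := by
  have h' : ∀ c, cyc K (linkCx Δ {v}) c ≤ bdd K (delCx Δ v) c := fun c => by
    rcases h c with h | h
    · exact ((finrank_homologyLevel_eq_zero hΔ.linkCx).1 h).trans
        (bdd_mono (linkCx_subset_delCx hΔ))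
    · exact (cyc_mono (linkCx_subset_delCx hΔ)).trans
        ((finrank_homologyLevel_eq_zero hΔ.delCx).1 h)
  have e1 := finrank_cyc hΔ hv (h' c)
  have e2 := finrank_bdd hΔ hv (h' (c + 1))
  have e3 := finrank_homologyLevel (K := K) (c := c + 1) hΔ
  have e4 := finrank_homologyLevel (K := K) (c := c) (hΔ.linkCx (v := v))
  have e5 := finrank_homologyLevel (K := K) (c := c + 1) (hΔ.delCx (v := v))
  omega

/-- A complex with a vertex has no reduced homology in degree `-1`. -/
lemma finrank_homologyLevel_zero (hΔ : DownClosed Δ) (h : {v} ∈ Δ) :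
    Module.finrank K (homologyLevel K Δ 0) = 0 := by
  rw [finrank_homologyLevel_eq_zero hΔ]
  rintro x ⟨hx, -⟩
  refine map_mem_of_degSub LinearMap.id _ (fun s hs hc => ?_) hx
  rw [card_eq_zero.1 hc]
  refine ⟨_, single_mem_degSub h (card_singleton v), ?_⟩
  simp [bdry_single, filter_singleton]

/-- A cone has no reduced homology: if `x = x₀ + ins v y` is a cycle with `x₀`, `y` avoiding the
apex `v`, then `∂ (ins v x₀) = ± x`. -/
lemma finrank_cone (hΔ : DownClosed Δ) (hv : ∀ s ∈ Δ, ∀ i ∈ s, i ≤ v)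
    (h : ∀ s ∈ Δ, insert v s ∈ Δ) (h0 : ∅ ∈ Δ) (c : ℕ) :
    Module.finrank K (homologyLevel K Δ c) = 0 := by
  have hv' : ∀ s ∈ Δ, v ∈ s → ∀ i ∈ s, i ≤ v := fun s hs _ => hv s hs
  cases c with
  | zero => exact finrank_homologyLevel_zero (v := v) hΔ (by simpa using h _ h0)
  | succ c =>
    rw [finrank_homologyLevel_eq_zero hΔ]
    rintro x ⟨hx, hx0⟩
    rw [SetLike.mem_coe, LinearMap.mem_ker] at hx0
    have hdl : delCx Δ v = linkCx Δ {v} := by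
      refine Subset.antisymm (fun s hs => ?_) (linkCx_subset_delCx hΔ)
      rw [mem_delCx] at hs
      exact mem_linkCx.2 ⟨hs.2, h s hs.1⟩
    have hy := lkProj_mem (v := v) hx
    have hx1 := sub_ins_mem (v := v) hx
    rw [hdl] at hx1
    have hy0 : bdry K (lkProj K v x) = 0 := by
      cases c with
      | zero =>
        refine eq_of_degSub (bdry K) 0 (fun s hs hc => ?_) hy
        rw [card_eq_zero.1 hc, bdry_empty, LinearMap.zero_apply]
      | succ c => rw [← lkProj_bdry hΔ hv' hx, hx0, map_zero]
    have e : bdry K (x - ins K v (lkProj K v x)) = -((-1 : K) ^ c • lkProj K v x) := by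
      rw [map_sub, hx0, bdry_ins (link_lt hv') hy, hy0]; simp
    have e2 := bdry_ins (link_lt hv') hx1
    rw [e] at e2
    refine ⟨(-1 : K) ^ (c + 1) • ins K v (x - ins K v (lkProj K v x)),
      Submodule.smul_mem _ _ (ins_mem hx1), ?_⟩
    rw [map_smul, e2, smul_add, map_neg, map_smul, smul_neg, smul_smul, smul_smul, pow_succ,
      mul_assoc, mul_comm (-1 : K), ← mul_assoc, ← mul_pow]
    simp [← mul_pow]

/-! ### Paths -/

/-- The independence complex of the path on the `m` consecutive vertices `a, …, a + m - 1`. -/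
noncomputable def pathCx (n a m : ℕ) : Finset (Finset (Fin n)) :=
  Finset.univ.powerset.filter fun s =>
    (∀ i ∈ s, a ≤ i.val ∧ i.val < a + m) ∧ ∀ i ∈ s, ∀ j ∈ s, i.val + 1 ≠ j.val

lemma mem_pathCx {a m : ℕ} {s : Finset (Fin n)} : s ∈ pathCx n a m ↔
    (∀ i ∈ s, a ≤ i.val ∧ i.val < a + m) ∧ ∀ i ∈ s, ∀ j ∈ s, i.val + 1 ≠ j.val := by
  simp [pathCx]

lemma downClosed_pathCx (a m : ℕ) : DownClosed (pathCx n a m) := by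
  intro s hs t ht
  rw [mem_pathCx] at hs ⊢
  exact ⟨fun i hi => hs.1 i (ht hi), fun i hi j hj => hs.2 i (ht hi) j (ht hj)⟩

lemma pathCx_zero (a : ℕ) : pathCx n a 0 = {∅} := by
  ext s
  rw [mem_pathCx, mem_singleton]
  constructor
  · rintro ⟨h, -⟩
    refine eq_empty_of_forall_notMem fun i hi => ?_
    have := h i hi
    omega
  · rintro rfl
    simp

variable (K) in
/-- The complex whose only face is `∅` is the sphere of dimension `-1`. -/
lemma finrank_empty_face (c : ℕ) :
    Module.finrank K (homologyLevel K ({∅} : Finset (Finset (Fin n))) c) =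
      if c = 0 then 1 else 0 := by
  have hd : DownClosed ({∅} : Finset (Finset (Fin n))) := by
    intro s hs t ht
    rw [mem_singleton] at hs ⊢
    subst hs
    exact subset_empty.1 ht
  have hb : ∀ c, degSub K ({∅} : Finset (Finset (Fin n))) (c + 1) = ⊥ := by
    intro c
    rw [eq_bot_iff]
    refine Submodule.span_le.2 ?_
    rintro _ ⟨s, hs, hc, rfl⟩
    rw [mem_singleton] at hs
    simp [hs] at hc
  have h := finrank_homologyLevel (K := K) (c := c) hd
  have hbd : bdd K ({∅} : Finset (Finset (Fin n))) c = ⊥ := by rw [bdd, hb, Submodule.map_bot]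
  rw [hbd, finrank_bot, add_zero] at h
  rw [h]
  cases c with
  | zero =>
    have : cyc K ({∅} : Finset (Finset (Fin n))) 0 = K ∙ Finsupp.single ∅ (1 : K) := by
      have e : degSub K ({∅} : Finset (Finset (Fin n))) 0 = K ∙ Finsupp.single ∅ (1 : K) := by
        simp [degSub]
      rw [cyc, e, inf_eq_left, Submodule.span_singleton_le_iff_mem, LinearMap.mem_ker, bdry_empty]
    rw [this, finrank_span_singleton (by simp)]
    simp
  | succ c => rw [cyc, hb, bot_inf_eq, finrank_bot]; simp

/-- The independence complex of a path on `m` vertices is a homology sphere of dimension `k - 1`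
if `m = 3k`, of dimension `k` if `m = 3k + 2`, and acyclic if `m = 3k + 1`. -/
lemma finrank_path (m : ℕ) : ∀ a, a + m ≤ n → ∀ c,
    Module.finrank K (homologyLevel K (pathCx n a m) c) =
      if m = 3 * c ∨ m + 1 = 3 * c then 1 else 0 := by
  induction m using Nat.strong_induction_on with
  | _ m ih =>
  intro a ham c
  obtain rfl | rfl | hm : m = 0 ∨ m = 1 ∨ 2 ≤ m := by omega
  · rw [pathCx_zero, finrank_empty_face]
    split_ifs <;> omega
  · rw [if_neg (by omega)]
    refine finrank_cone (v := ⟨a, by omega⟩) (downClosed_pathCx a 1) ?_ ?_ ?_ c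
    · intro s hs i hi
      have := (mem_pathCx.1 hs).1 i hi
      rw [Fin.le_def]; dsimp only; omega
    · intro s hs
      rw [mem_pathCx] at hs ⊢
      refine ⟨fun i hi => ?_, fun i hi j hj => ?_⟩ <;> grind
    · simp [mem_pathCx]
  · have hd := downClosed_pathCx (n := n) a m
    cases c with
    | zero =>
      rw [if_neg (by omega)]
      refine finrank_homologyLevel_zero (v := ⟨a, by omega⟩) hd ?_
      rw [mem_pathCx]
      refine ⟨fun i hi => ?_, fun i hi j hj => ?_⟩ <;> grind
    | succ c =>
      -- split at the neighbour `v` of the endpoint `w`: the deletion is a cone with apex `w`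
      set v : Fin n := ⟨a + m - 2, by omega⟩ with hv
      set w : Fin n := ⟨a + m - 1, by omega⟩ with hw
      have hvv : v.val = a + m - 2 := rfl
      have hww : w.val = a + m - 1 := rfl
      have hmax : ∀ s ∈ pathCx n a m, v ∈ s → ∀ i ∈ s, i ≤ v := by
        intro s hs hvs i hi
        rw [mem_pathCx] at hs
        have h1 := hs.1 i hi
        have h2 := hs.2 v hvs i hi
        rw [Fin.le_def]; omega
      have hdel : ∀ c, Module.finrank K (homologyLevel K (delCx (pathCx n a m) v) c) = 0 := by
        refine finrank_cone (v := w) hd.delCx ?_ ?_ ?_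
        · intro s hs i hi
          have h1 := (mem_pathCx.1 (mem_delCx.1 hs).1).1 i hi
          rw [Fin.le_def]; omega
        · intro s hs
          rw [mem_delCx, mem_pathCx] at hs ⊢
          obtain ⟨⟨h1, h2⟩, h3⟩ := hs
          have h4 : ∀ i ∈ s, i.val ≠ a + m - 2 := fun i hi h =>
            h3 ((Fin.ext (h.trans hvv.symm) : i = v) ▸ hi)
          refine ⟨⟨fun i hi => ?_, fun i hi j hj => ?_⟩, fun h => ?_⟩
          · rcases mem_insert.1 hi with rfl | hi
            · omega
            · exact h1 i hi
          · rcases mem_insert.1 hi with rfl | hi <;> rcases mem_insert.1 hj with rfl | hj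
            · omega
            · have := h1 j hj; omega
            · have := h4 i hi; omega
            · exact h2 i hi j hj
          · rcases mem_insert.1 h with h | h
            · have := congrArg Fin.val h; omega
            · exact h3 h
        · simp [mem_delCx, mem_pathCx]
      have hlk : linkCx (pathCx n a m) {v} = pathCx n a (m - 3) := by
        ext s
        rw [mem_linkCx, mem_pathCx, mem_pathCx]
        constructor
        · rintro ⟨h0, h1, h2⟩
          refine ⟨fun i hi => ?_, fun i hi j hj =>
            h2 i (mem_insert_of_mem hi) j (mem_insert_of_mem hj)⟩
          have h3 := h1 i (mem_insert_of_mem hi)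
          have h4 := h2 i (mem_insert_of_mem hi) v (mem_insert_self _ _)
          have h5 := h2 v (mem_insert_self _ _) i (mem_insert_of_mem hi)
          have h6 : i.val ≠ v.val := fun h => h0 (Fin.ext h ▸ hi)
          omega
        · rintro ⟨h1, h2⟩
          refine ⟨fun h => ?_, fun i hi => ?_, fun i hi j hj => ?_⟩
          · have := h1 v h; omega
          · rcases mem_insert.1 hi with rfl | hi
            · omega
            · have := h1 i hi; omega
          · rcases mem_insert.1 hi with rfl | hi <;> rcases mem_insert.1 hj with rfl | hj
            · omega
            · have := h1 j hj; omega
            · have := h1 i hi; omega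
            · exact h2 i hi j hj
      rw [finrank_homologyLevel_succ hd hmax (fun c => .inr (hdel c)), hdel, hlk,
        ih (m - 3) (by omega) a (by omega)]
      split_ifs <;> omega

/-! ### Cycles -/

lemma mem_indepCx {G : SimpleGraph (Fin n)} {s : Finset (Fin n)} :
    s ∈ indepCx G ↔ ∀ i ∈ s, ∀ j ∈ s, ¬ G.Adj i j := by
  simp [indepCx]

lemma cycleGraph_adj_val (hn : 2 ≤ n) (i j : Fin n) : (cycleGraph n).Adj i j ↔
    i.val + 1 = j.val ∨ j.val + 1 = i.val ∨ (i.val = 0 ∧ j.val + 1 = n) ∨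
      (j.val = 0 ∧ i.val + 1 = n) := by
  rw [cycleGraph_adj', Fin.val_sub, Fin.val_sub]
  have hi := i.isLt
  have hj := j.isLt
  rcases lt_trichotomy i.val j.val with h | h | h
  · rw [Nat.mod_eq_of_lt (by omega), Nat.mod_eq_sub_mod (by omega), Nat.mod_eq_of_lt (by omega)]
    omega
  · rw [h, Nat.sub_add_cancel hj.le, Nat.mod_self]
    omega
  · rw [Nat.mod_eq_sub_mod (by omega), Nat.mod_eq_of_lt (by omega), Nat.mod_eq_of_lt (by omega)]
    omega

lemma downClosed_indepCx (G : SimpleGraph (Fin n)) : DownClosed (indepCx G) := by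
  intro s hs t ht
  rw [mem_indepCx] at hs ⊢
  exact fun i hi j hj => hs i (ht hi) j (ht hj)

/-- Splitting the cycle at its last vertex: the deletion is a path on `n - 1` vertices and the link
a path on `n - 3` vertices, and these never have homology in the same degree. For `n = 2` the link
is `{∅}`, in agreement with the truncated value `n - 3 = 0`. -/
lemma finrank_cycle (hn : 2 ≤ n) (c : ℕ) :
    Module.finrank K (homologyLevel K (indepCx (cycleGraph n)) (c + 1)) =
      (if n - 3 = 3 * c ∨ n - 3 + 1 = 3 * c then 1 else 0) +
        if n - 1 = 3 * (c + 1) ∨ n - 1 + 1 = 3 * (c + 1) then 1 else 0 := by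
  have hd := downClosed_indepCx (cycleGraph n)
  set v : Fin n := ⟨n - 1, by omega⟩ with hv
  have hvv : v.val = n - 1 := rfl
  have hmem : ∀ s : Finset (Fin n), s ∈ indepCx (cycleGraph n) ↔ ∀ i ∈ s, ∀ j ∈ s,
      i.val + 1 ≠ j.val ∧ ¬ (i.val = 0 ∧ j.val + 1 = n) := by
    intro s
    simp only [mem_indepCx, cycleGraph_adj_val hn]
    constructor
    · intro h i hi j hj
      have := h i hi j hj
      omega
    · intro h i hi j hj
      have h1 := h i hi j hj
      have h2 := h j hj i hi
      omega
  have hmax : ∀ s ∈ indepCx (cycleGraph n), v ∈ s → ∀ i ∈ s, i ≤ v := by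
    intro s _ _ i _
    rw [Fin.le_def]; omega
  have hdel : delCx (indepCx (cycleGraph n)) v = pathCx n 0 (n - 1) := by
    ext s
    rw [mem_delCx, hmem, mem_pathCx]
    constructor
    · rintro ⟨h1, h2⟩
      refine ⟨fun i hi => ?_, fun i hi j hj => (h1 i hi j hj).1⟩
      have : i.val ≠ v.val := fun h => h2 (Fin.ext h ▸ hi)
      omega
    · rintro ⟨h1, h2⟩
      refine ⟨fun i hi j hj => ⟨h2 i hi j hj, ?_⟩, fun h => ?_⟩
      · have := h1 j hj; omega
      · have := h1 v h; omega
  have hlk : linkCx (indepCx (cycleGraph n)) {v} = pathCx n 1 (n - 3) := by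
    ext s
    rw [mem_linkCx, hmem, mem_pathCx]
    constructor
    · rintro ⟨h0, h1⟩
      refine ⟨fun i hi => ?_, fun i hi j hj =>
        (h1 i (mem_insert_of_mem hi) j (mem_insert_of_mem hj)).1⟩
      have h2 := h1 i (mem_insert_of_mem hi) v (mem_insert_self _ _)
      have h3 := h1 v (mem_insert_self _ _) i (mem_insert_of_mem hi)
      have h4 : i.val ≠ v.val := fun h => h0 (Fin.ext h ▸ hi)
      omega
    · rintro ⟨h1, h2⟩
      refine ⟨fun h => ?_, fun i hi j hj => ?_⟩
      · have := h1 v h; omega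
      · rcases mem_insert.1 hi with rfl | hi <;> rcases mem_insert.1 hj with rfl | hj
        · omega
        · have := h1 j hj; omega
        · have := h1 i hi; omega
        · have := h1 i hi
          exact ⟨h2 i hi j hj, by omega⟩
  rw [finrank_homologyLevel_succ hd hmax ?_, hlk, hdel]
  · rw [finrank_path _ 1 (by omega), finrank_path _ 0 (by omega)]
  · intro c
    rw [hlk, hdel, finrank_path _ 1 (by omega), finrank_path _ 0 (by omega)]
    split_ifs <;> omega

lemma indepCx_cycleGraph_one : indepCx (cycleGraph 1) = pathCx 1 0 1 := by
  ext s
  rw [mem_indepCx, mem_pathCx]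
  refine ⟨fun _ => ⟨fun i _ => by omega, fun i _ j _ => by omega⟩, fun _ i _ j _ h => ?_⟩
  exact h.ne (Subsingleton.elim i j)

instance finite_quotMod {M : Type} [AddCommGroup M] [Module K M] [Module.Finite K M]
    (A B : Submodule K M) : Module.Finite K (quotMod K A B) :=
  inferInstanceAs (Module.Finite K (↥A ⧸ Submodule.comap A.subtype B))

instance finite_reducedHomology (i : ℕ) : Module.Finite K (reducedHomology K Δ i) :=
  inferInstanceAs (Module.Finite K (quotMod K _ _))

end CycleHomology

/-- For the clique complexes `Δ_n = Δ(C_nᶜ)` of complements of cycles: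
`H̃_i(Δ_n; K) ≅ H̃_{i-1}(Δ_{n-3}; K)` for `n ≥ 4` and `i ≥ 1`; consequently
`dim_K H̃_{k-1}(Δ_{3k}; K) = 2`, `dim_K H̃_{k-1}(Δ_{3k+1}; K) = 1` and
`dim_K H̃_k(Δ_{3k+2}; K) = 1`. -/
theorem cycle_compl_reducedHomology (n i : ℕ) (hn : 4 ≤ n) (hi : 1 ≤ i) :
    Nonempty (reducedHomology K (indepCx (cycleGraph n)) i ≃ₗ[K]
        reducedHomology K (indepCx (cycleGraph (n - 3))) (i - 1)) ∧
      ∀ k : ℕ, 1 ≤ k →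
        Module.finrank K (reducedHomology K (indepCx (cycleGraph (3 * k))) (k - 1)) = 2 ∧
        Module.finrank K
          (reducedHomology K (indepCx (cycleGraph (3 * k + 1))) (k - 1)) = 1 ∧
        Module.finrank K (reducedHomology K (indepCx (cycleGraph (3 * k + 2))) k) = 1 := by
  constructor
  · refine ⟨LinearEquiv.ofFinrankEq _ _ ?_⟩
    obtain ⟨i, rfl⟩ : ∃ j, i = j + 1 := ⟨i - 1, by omega⟩
    rw [Nat.add_sub_cancel]
    refine (finrank_cycle (by omega) (i + 1)).trans ?_
    obtain rfl | h5 : n = 4 ∨ 5 ≤ n := by omega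
    · have h1 : Module.finrank K (homologyLevel K (indepCx (cycleGraph 1)) (i + 1)) = 0 := by
        rw [indepCx_cycleGraph_one, finrank_path 1 0 (by omega), if_neg (by omega)]
      refine Eq.trans ?_ h1.symm
      split_ifs <;> omega
    · refine Eq.trans ?_ (finrank_cycle (by omega) i).symm
      split_ifs <;> omega
  · intro k hk
    refine ⟨(finrank_cycle (by omega) (k - 1)).trans ?_,
      (finrank_cycle (by omega) (k - 1)).trans ?_, (finrank_cycle (by omega) k).trans ?_⟩ <;>
    split_ifs <;> omega
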